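/- Let Γ^a_{bc} be a torsion-free affine connection of class C⁴ on an open set U ⊆ ℝ², with ε_{ab}, ε^{ab}, θ_a, P_{ab}, P^b{}_a and β as in the context. A C¹ 1-form K on U satisfies the Killing equation ∇_{(a}K_{b)} = 0 if and only if there exists a function μ : U → ℝ such that for all indices a, b: ∇_a K_b − ε_{ab}·μ = 0 and ∂_a μ − (P^b{}_a + ½β·δ^b_a)·K_b + μ·θ_a = 0. Moreover such μ is unique, namely μ = ½ε^{ab}∇_a K_b, so that solutions of the Killing equation are in one-to-one correspondence with parallel sections of the prolongation connection D. -/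

import Mathlib

/-- Partial derivative `∂_i f` on `ℝ²` (points as `Fin 2 → ℝ`). -/
noncomputable def pdv (i : Fin 2) (f : (Fin 2 → ℝ) → ℝ) (x : Fin 2 → ℝ) : ℝ :=
  fderiv ℝ f x (Pi.single i 1)

/-- Covariant derivative `∇_a K_b` of a 1-form. -/
noncomputable def covForm (Γ : Fin 2 → Fin 2 → Fin 2 → (Fin 2 → ℝ) → ℝ)
    (K : Fin 2 → (Fin 2 → ℝ) → ℝ) (a b : Fin 2) (x : Fin 2 → ℝ) : ℝ :=
  pdv a (K b) x - ∑ c, Γ c a b x * K c x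

/-- Covariant derivative `∇_a ε_{bc}` of a 2-form. -/
noncomputable def covTwo (Γ : Fin 2 → Fin 2 → Fin 2 → (Fin 2 → ℝ) → ℝ)
    (ε : Fin 2 → Fin 2 → (Fin 2 → ℝ) → ℝ) (a b c : Fin 2) (x : Fin 2 → ℝ) : ℝ :=
  pdv a (ε b c) x - ∑ d, Γ d a b x * ε d c x - ∑ d, Γ d a c x * ε b d x

/-- Curvature `R_{ab}{}^c{}_d` of the connection `Γ`. -/
noncomputable def riem (Γ : Fin 2 → Fin 2 → Fin 2 → (Fin 2 → ℝ) → ℝ)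
    (a b c d : Fin 2) (x : Fin 2 → ℝ) : ℝ :=
  pdv a (Γ c b d) x - pdv b (Γ c a d) x
    + ∑ e, Γ c a e x * Γ e b d x - ∑ e, Γ c b e x * Γ e a d x

/-- Ricci tensor `R_{ab} = R_{ca}{}^c{}_b`. -/
noncomputable def ricci (Γ : Fin 2 → Fin 2 → Fin 2 → (Fin 2 → ℝ) → ℝ)
    (a b : Fin 2) (x : Fin 2 → ℝ) : ℝ :=
  ∑ c, riem Γ c a c b x

/-- Projective Schouten tensor `P_{ab} = (2/3)R_{ab} + (1/3)R_{ba}`. -/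
noncomputable def schouten (Γ : Fin 2 → Fin 2 → Fin 2 → (Fin 2 → ℝ) → ℝ)
    (a b : Fin 2) (x : Fin 2 → ℝ) : ℝ :=
  (2 / 3) * ricci Γ a b x + (1 / 3) * ricci Γ b a x

/-- `β = B_{ab} ε^{ab}` where `B_{ab} = P_{ba} − P_{ab}`. -/
noncomputable def betaInv (Γ : Fin 2 → Fin 2 → Fin 2 → (Fin 2 → ℝ) → ℝ)
    (εUp : Fin 2 → Fin 2 → (Fin 2 → ℝ) → ℝ) (x : Fin 2 → ℝ) : ℝ :=
  ∑ a, ∑ b, (schouten Γ b a x - schouten Γ a b x) * εUp a b x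

/-- `θ_a = ½ ε^{bc} ∇_a ε_{bc}`. -/
noncomputable def thetaForm (Γ : Fin 2 → Fin 2 → Fin 2 → (Fin 2 → ℝ) → ℝ)
    (ε εUp : Fin 2 → Fin 2 → (Fin 2 → ℝ) → ℝ) (a : Fin 2) (x : Fin 2 → ℝ) : ℝ :=
  (1 / 2) * ∑ b, ∑ c, εUp b c x * covTwo Γ ε a b c x

/-- `P^b{}_a = ε^{bc} P_{ca}`. -/
noncomputable def schoutenUp (Γ : Fin 2 → Fin 2 → Fin 2 → (Fin 2 → ℝ) → ℝ)
    (εUp : Fin 2 → Fin 2 → (Fin 2 → ℝ) → ℝ) (b a : Fin 2) (x : Fin 2 → ℝ) : ℝ :=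
  ∑ c, εUp b c x * schouten Γ c a x

/-!
If `K` is Killing then `∂_a K_b + ∂_b K_a = 2 Γ^c_{ab} K_c` is of class `C¹`. Since two of three
indices in the plane coincide, Peano's theorem on mixed derivatives then yields all second
derivatives of `K` as combinations of first derivatives of the right-hand side, so `K` is `C²`.

The skew tensor `∇_a K_b` equals `ε_{ab} μ` with `μ = ½ ε^{ab} ∇_a K_b`. Because
`∇_a ε_{bc} = θ_a ε_{bc}`, differentiating gives `∇_a ∇_b K_c = ε_{bc} ν_a` for
`ν_a = ∂_a μ + μ θ_a`. The Ricci identity and the cyclic identity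
`ε_{bc} ν_a + ε_{ca} ν_b + ε_{ab} ν_c = 0` turn this into `ε_{ab} ν_c = R_{ab}{}^d{}_c K_d`, and
contraction with `½ ε^{ab}`, using that the projective Weyl curvature of a surface vanishes, is the
second parallelism equation.
-/

open Filter Topology

section MixedDerivatives

variable {𝕜 E F : Type*} [RCLike 𝕜] [NormedAddCommGroup E] [NormedSpace 𝕜 E]
  [NormedAddCommGroup F] [NormedSpace 𝕜 F]

theorem hasDerivAt_of_hasLineDerivAt {f : E → F} {f' : F} {x v : E} {t : 𝕜}
    (h : HasLineDerivAt 𝕜 f f' (x + t • v) v) : HasDerivAt (fun s : 𝕜 => f (x + s • v)) f' t := by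
  have h' : HasDerivAt (fun s : 𝕜 => f (x + t • v + s • v)) f' (t - t) := by rwa [sub_self]
  refine (h'.comp_sub_const t t).congr_of_eventuallyEq (.of_forall fun s => ?_)
  simp only [sub_smul, add_add_sub_cancel]

theorem tendsto_slope_of_hasStrictFDerivAt {g : E → F} {g' : E →L[𝕜] F} {x : E}
    (hg : HasStrictFDerivAt g g' x) (w : E) :
    Tendsto (fun p : 𝕜 × E => p.1⁻¹ • (g (p.2 + p.1 • w) - g p.2)) (𝓝[≠] 0 ×ˢ 𝓝 x)
      (𝓝 (g' w)) := by
  have hlim : Tendsto (fun p : 𝕜 × E => (p.2 + p.1 • w, p.2)) (𝓝[≠] 0 ×ˢ 𝓝 x) (𝓝 (x, x)) := by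
    refine Tendsto.mono_left ?_ (prod_mono_left _ nhdsWithin_le_nhds)
    rw [← nhds_prod_eq]
    exact Continuous.tendsto' (by fun_prop) _ _ (by simp)
  have hlittle : (fun p : 𝕜 × E => g (p.2 + p.1 • w) - g p.2 - p.1 • g' w)
      =o[𝓝[≠] 0 ×ˢ 𝓝 x] fun p => p.1 := by
    have h := hg.isLittleO.comp_tendsto hlim
    simp only [Function.comp_def, add_sub_cancel_left, map_smul] at h
    refine h.trans_isBigO (.of_bound ‖w‖ (.of_forall fun p => ?_))
    rw [norm_smul, mul_comm]
  have hne : ∀ᶠ p : 𝕜 × E in 𝓝[≠] 0 ×ˢ 𝓝 x, p.1 ≠ 0 :=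
    eventually_mem_nhdsWithin.prod_inl _
  refine tendsto_sub_nhds_zero_iff.1 (hlittle.tendsto_inv_smul_nhds_zero.congr' ?_)
  filter_upwards [hne] with p hp
  rw [smul_sub, inv_smul_smul₀ hp]

/-- Peano's form of the symmetry of mixed derivatives: the existence of the iterated derivative
`∂_v ∂_w f` is part of the conclusion. -/
theorem hasLineDerivAt_mixed {f g h : E → F} {g' : E →L[𝕜] F} {x v w : E}
    (hv : ∀ᶠ y in 𝓝 x, HasLineDerivAt 𝕜 f (g y) y v)
    (hw : ∀ᶠ y in 𝓝 x, HasLineDerivAt 𝕜 f (h y) y w)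
    (hg : HasStrictFDerivAt g g' x) : HasLineDerivAt 𝕜 h (g' w) x v := by
  have hline : Tendsto (fun t : 𝕜 => x + t • v) (𝓝 0) (𝓝 x) :=
    Continuous.tendsto' (by fun_prop) _ _ (by simp)
  have hplane : Tendsto (fun p : 𝕜 × 𝕜 => x + p.1 • w + p.2 • v) (𝓝[≠] 0 ×ˢ 𝓝 0) (𝓝 x) := by
    refine Tendsto.mono_left ?_ (prod_mono_left _ nhdsWithin_le_nhds)
    rw [← nhds_prod_eq]
    exact Continuous.tendsto' (by fun_prop) _ _ (by simp)
  -- The difference quotients of `f` along `w` converge to `h`, their `v`-derivatives are the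
  -- difference quotients of `g` along `w`, and these converge uniformly near `x` to `g' w`.
  refine hasDerivAt_of_tendstoUniformlyOnFilter (l := 𝓝[≠] (0 : 𝕜)) (g' := fun _ => g' w)
    (f := fun s t => s⁻¹ • (f (x + t • v + s • w) - f (x + t • v)))
    (f' := fun s t => s⁻¹ • (g (x + t • v + s • w) - g (x + t • v))) ?_ ?_ ?_
  · rw [tendstoUniformlyOnFilter_iff_tendsto, ← Uniform.tendsto_nhds_right]
    exact (tendsto_slope_of_hasStrictFDerivAt hg w).comp (tendsto_id.prodMap hline)
  · filter_upwards [hplane.eventually hv, (hline.eventually hv).prod_inr _] with p hp hp'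
    have hp_shift := hasDerivAt_of_hasLineDerivAt hp
    simp only [add_right_comm x (p.1 • w)] at hp_shift
    exact (hp_shift.sub (hasDerivAt_of_hasLineDerivAt hp')).const_smul _
  · exact (hline.eventually hw).mono fun t ht => hasLineDerivAt_iff_tendsto_slope_zero.1 ht

end MixedDerivatives

section PartialDerivatives

variable {f g : (Fin 2 → ℝ) → ℝ} {x : Fin 2 → ℝ} {U : Set (Fin 2 → ℝ)}

theorem hasLineDerivAt_pdv (hf : DifferentiableAt ℝ f x) (i : Fin 2) :
    HasLineDerivAt ℝ f (pdv i f x) x (Pi.single i 1) :=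
  hf.hasFDerivAt.hasLineDerivAt _

theorem pdv_neg (i : Fin 2) : pdv i (fun y => -f y) x = -pdv i f x := by
  simp only [pdv, fderiv_fun_neg, neg_apply]

theorem pdv_sum {ι : Type*} [Fintype ι] {f : ι → (Fin 2 → ℝ) → ℝ}
    (hf : ∀ j, DifferentiableAt ℝ (f j) x) (i : Fin 2) :
    pdv i (fun y => ∑ j, f j y) x = ∑ j, pdv i (f j) x := by
  simp only [pdv, fderiv_fun_sum fun j _ => hf j, sum_apply]

theorem pdv_sub (hf : DifferentiableAt ℝ f x) (hg : DifferentiableAt ℝ g x) (i : Fin 2) :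
    pdv i (fun y => f y - g y) x = pdv i f x - pdv i g x := by
  simp only [pdv, fderiv_fun_sub hf hg, sub_apply]

theorem pdv_mul (hf : DifferentiableAt ℝ f x) (hg : DifferentiableAt ℝ g x) (i : Fin 2) :
    pdv i (fun y => f y * g y) x = pdv i f x * g x + f x * pdv i g x := by
  simp only [pdv, fderiv_fun_mul hf hg, add_apply, smul_apply, smul_eq_mul]
  ring

theorem pdv_congr (h : f =ᶠ[𝓝 x] g) (i : Fin 2) : pdv i f x = pdv i g x := by
  simp only [pdv, h.fderiv_eq]

theorem fderiv_apply_eq_sum_pdv (v : Fin 2 → ℝ) : fderiv ℝ f x v = ∑ i, v i * pdv i f x := by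
  conv_lhs => rw [pi_eq_sum_univ' v]
  simp [pdv]

theorem pdv_comm (hf : ContDiffAt ℝ 2 f x) (i j : Fin 2) :
    pdv i (pdv j f) x = pdv j (pdv i f) x := by
  have hf' : DifferentiableAt ℝ (fderiv ℝ f) x :=
    (hf.fderiv_right (m := 1) (by norm_num)).differentiableAt (by norm_num)
  have hsymm : IsSymmSndFDerivAt ℝ f x := hf.isSymmSndFDerivAt (by simp)
  have hpdv (i j : Fin 2) : pdv i (pdv j f) x
      = fderiv ℝ (fderiv ℝ f) x (Pi.single i 1) (Pi.single j 1) := by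
    unfold pdv
    rw [fderiv_clm_apply hf' (differentiableAt_const _)]
    simp
  rw [hpdv, hpdv, hsymm.eq]

theorem contDiffOn_succ_of_pdv {n : ℕ} (hU : IsOpen U) (hf : DifferentiableOn ℝ f U)
    (hpdv : ∀ i, ContDiffOn ℝ n (pdv i f) U) : ContDiffOn ℝ (n + 1) f U := by
  refine (contDiffOn_succ_iff_fderiv_of_isOpen hU).2 ⟨hf, by simp, ?_⟩
  refine contDiffOn_clm_apply.2 fun v => ?_
  simp only [fderiv_apply_eq_sum_pdv]
  exact ContDiffOn.sum fun i _ => contDiffOn_const.mul (hpdv i)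

theorem differentiableAt_pdv (hf : ContDiffAt ℝ 2 f x) (i : Fin 2) :
    DifferentiableAt ℝ (pdv i f) x :=
  ((hf.fderiv_right (m := 1) (by norm_num)).differentiableAt (by norm_num)).clm_apply
    (differentiableAt_const _)

theorem continuousOn_pdv (hU : IsOpen U) (hf : ContDiffOn ℝ 1 f U) (i : Fin 2) :
    ContinuousOn (pdv i f) U :=
  (hf.continuousOn_fderiv_of_isOpen hU le_rfl).clm_apply continuousOn_const

theorem differentiableAt_of_hasLineDerivAt {f' : Fin 2 → (Fin 2 → ℝ) → ℝ}
    (hf : ∀ i, ∀ᶠ y in 𝓝 x, HasLineDerivAt ℝ f (f' i y) y (Pi.single i 1))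
    (hf' : ∀ i, ContinuousAt (f' i) x) : DifferentiableAt ℝ f x := by
  let e := ContinuousLinearEquiv.finTwoArrow ℝ ℝ
  obtain ⟨p, rfl⟩ := e.symm.surjective x
  have he : Tendsto e.symm (𝓝 p) (𝓝 (e.symm p)) := e.symm.continuous.continuousAt
  have hcont (i : Fin 2) : ContinuousAt
      (fun q : ℝ × ℝ => ContinuousLinearMap.toSpanSingleton ℝ (f' i ![q.1, q.2])) p :=
    (ContinuousLinearMap.toSpanSingletonCLE (𝕜 := ℝ)).continuous.continuousAt.comp
      (f := fun q : ℝ × ℝ => f' i ![q.1, q.2]) ((hf' i).tendsto.comp he)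
  have hfst : ∀ᶠ q : ℝ × ℝ in 𝓝 p, HasFDerivAt (fun s => f ![s, q.2])
      (ContinuousLinearMap.toSpanSingleton ℝ (f' 0 ![q.1, q.2])) q.1 := by
    have hline (s t : ℝ) : ![0, t] + s • Pi.single 0 1 = ![s, t] := by
      ext i; fin_cases i <;> simp
    filter_upwards [he.eventually (hf 0)] with ⟨s, t⟩ h
    change HasLineDerivAt ℝ f (f' 0 ![s, t]) ![s, t] _ at h
    rw [← hline s t] at h
    simpa only [hline] using (hasDerivAt_of_hasLineDerivAt h).hasFDerivAt
  have hsnd : ∀ᶠ q : ℝ × ℝ in 𝓝 p, HasFDerivAt (fun t => f ![q.1, t])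
      (ContinuousLinearMap.toSpanSingleton ℝ (f' 1 ![q.1, q.2])) q.2 := by
    have hline (s t : ℝ) : ![s, 0] + t • Pi.single 1 1 = ![s, t] := by
      ext i; fin_cases i <;> simp
    filter_upwards [he.eventually (hf 1)] with ⟨s, t⟩ h
    change HasLineDerivAt ℝ f (f' 1 ![s, t]) ![s, t] _ at h
    rw [← hline s t] at h
    simpa only [hline] using (hasDerivAt_of_hasLineDerivAt h).hasFDerivAt
  have huncurry : DifferentiableAt ℝ (f ∘ e.symm) p :=
    (hasStrictFDerivAt_uncurry_coprod (f := fun s t => f ![s, t])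
      (f₁ := fun s t => ContinuousLinearMap.toSpanSingleton ℝ (f' 0 ![s, t]))
      (f₂ := fun s t => ContinuousLinearMap.toSpanSingleton ℝ (f' 1 ![s, t]))
      hfst hsnd (hcont 0) (hcont 1)).differentiableAt
  exact e.symm.comp_right_differentiableAt_iff.1 huncurry

theorem contDiffOn_one_of_hasLineDerivAt (hU : IsOpen U) {f' : Fin 2 → (Fin 2 → ℝ) → ℝ}
    (hf : ∀ i, ∀ x ∈ U, HasLineDerivAt ℝ f (f' i x) x (Pi.single i 1))
    (hf' : ∀ i, ContinuousOn (f' i) U) : ContDiffOn ℝ 1 f U := by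
  have hdiff (x) (hx : x ∈ U) : DifferentiableAt ℝ f x :=
    differentiableAt_of_hasLineDerivAt
      (fun i => eventually_of_mem (hU.mem_nhds hx) (hf i))
      (fun i => (hf' i).continuousAt (hU.mem_nhds hx))
  refine contDiffOn_succ_of_pdv (n := 0) hU (fun x hx => (hdiff x hx).differentiableWithinAt)
    fun i => contDiffOn_zero.2 ((hf' i).congr fun x hx => ?_)
  exact (hasLineDerivAt_pdv (hdiff x hx) i).unique (hf i x hx)

end PartialDerivatives

section SymmetrizedGradient

variable {U : Set (Fin 2 → ℝ)} {K : Fin 2 → (Fin 2 → ℝ) → ℝ}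
  {S : Fin 2 → Fin 2 → (Fin 2 → ℝ) → ℝ}

/-- In the plane two of the three indices agree. If `b = c` then `∂_b K_c` is half of `S_bb`, if
`a = c` Peano's theorem applies because `∂_a K_a` is half of `S_aa`, and `a = b` reduces to the
previous case through `∂_b K_c + ∂_c K_b = S_bc`. -/
theorem hasLineDerivAt_pdv_of_pdv_add_pdv (hU : IsOpen U)
    (hK : ∀ a, DifferentiableOn ℝ (K a) U) (hS : ∀ a b, ContDiffOn ℝ 1 (S a b) U)
    (hKS : ∀ a b, ∀ x ∈ U, pdv a (K b) x + pdv b (K a) x = S a b x) (a b c : Fin 2) :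
    ∀ x ∈ U, HasLineDerivAt ℝ (pdv b (K c))
      (1 / 2 * (pdv a (S b c) x + pdv b (S a c) x - pdv c (S a b) x)) x (Pi.single a 1) := by
  intro x hx
  have hUx : U ∈ 𝓝 x := hU.mem_nhds hx
  have hKline (a d : Fin 2) : ∀ᶠ y in 𝓝 x, HasLineDerivAt ℝ (K a) (pdv d (K a) y) y _ :=
    eventually_of_mem hUx fun y hy => hasLineDerivAt_pdv ((hK a).differentiableAt
      (hU.mem_nhds hy)) d
  have hSx (a b : Fin 2) : HasStrictFDerivAt (S a b) (fderiv ℝ (S a b) x) x :=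
    ((hS a b).contDiffAt hUx).hasStrictFDerivAt (by norm_num)
  have hSsymm (d a b : Fin 2) : pdv d (S a b) x = pdv d (S b a) x :=
    pdv_congr (eventually_of_mem hUx fun y hy => by
      rw [← hKS a b y hy, ← hKS b a y hy, add_comm]) d
  have hdiag (a : Fin 2) : pdv a (K a) =ᶠ[𝓝 x] fun y => 1 / 2 * S a a y :=
    eventually_of_mem hUx fun y hy => by linarith [hKS a a y hy]
  have hmixed (a d : Fin 2) :
      HasLineDerivAt ℝ (pdv d (K a)) (1 / 2 * pdv d (S a a) x) x (Pi.single a 1) := by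
    refine hasLineDerivAt_mixed ?_ (hKline a d) ((hSx a a).const_mul (1 / 2))
    filter_upwards [hKline a a, hdiag a] with y hline hy
    rwa [hy] at hline
  obtain rfl | rfl | rfl : b = c ∨ a = c ∨ a = b := by omega
  · rw [hSsymm b a b, add_sub_cancel_right]
    exact (((hSx b b).hasFDerivAt.const_mul (1 / 2)).hasLineDerivAt _).congr_of_eventuallyEq
      (hdiag b)
  · rw [hSsymm a b a, add_sub_cancel_left]
    exact hmixed a b
  · have hoff : pdv a (K c) =ᶠ[𝓝 x] fun y => S a c y - pdv c (K a) y :=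
      eventually_of_mem hUx fun y hy => eq_sub_of_add_eq (hKS a c y hy)
    have hsub : HasLineDerivAt ℝ (fun y => S a c y - pdv c (K a) y)
        (pdv a (S a c) x - 1 / 2 * pdv c (S a a) x) x (Pi.single a 1) :=
      ((hSx a c).hasFDerivAt.hasLineDerivAt _).sub (hmixed a c)
    rw [show 1 / 2 * (pdv a (S a c) x + pdv a (S a c) x - pdv c (S a a) x)
      = pdv a (S a c) x - 1 / 2 * pdv c (S a a) x by ring]
    exact hsub.congr_of_eventuallyEq hoff

theorem contDiffOn_two_of_pdv_add_pdv (hU : IsOpen U)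
    (hK : ∀ a, DifferentiableOn ℝ (K a) U) (hS : ∀ a b, ContDiffOn ℝ 1 (S a b) U)
    (hKS : ∀ a b, ∀ x ∈ U, pdv a (K b) x + pdv b (K a) x = S a b x) (c : Fin 2) :
    ContDiffOn ℝ 2 (K c) U := by
  refine contDiffOn_succ_of_pdv (n := 1) hU (hK c) fun b => ?_
  refine contDiffOn_one_of_hasLineDerivAt hU
    (fun a => hasLineDerivAt_pdv_of_pdv_add_pdv hU hK hS hKS a b c) fun a => ?_
  have hpdvS (i j k : Fin 2) := continuousOn_pdv hU (hS j k) i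
  exact continuousOn_const.mul (((hpdvS a b c).add (hpdvS b a c)).sub (hpdvS c a b))

end SymmetrizedGradient

section AreaForm

theorem sum_mul_eq_card {ι R : Type*} [Fintype ι] [DecidableEq ι] [NonAssocSemiring R]
    {e E : ι → ι → R} (hE : ∀ a c, ∑ b, E a b * e c b = if a = c then 1 else 0) :
    ∑ a, ∑ b, E a b * e a b = Fintype.card ι := by
  simp [hE]

theorem skew_of_mul_transpose_eq_one {ι R : Type*} [Fintype ι] [DecidableEq ι] [CommRing R]
    {e E : ι → ι → R} (he : ∀ a b, e a b = -e b a)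
    (hE : ∀ a c, ∑ b, E a b * e c b = if a = c then 1 else 0) (a b : ι) :
    E a b = -E b a := by
  let M := Matrix.of e
  let N := Matrix.of E
  have hM : M.transpose = -M := Matrix.ext fun i j => he j i
  have hNM : N * M.transpose = 1 := Matrix.ext fun i j => by
    simpa [M, N, Matrix.mul_apply, Matrix.one_apply] using hE i j
  have hMN : M * N.transpose = 1 := by simpa using congrArg Matrix.transpose hNM
  have hN : N = -N.transpose := calc
    N = N * (M * N.transpose) := by rw [hMN, mul_one]
    _ = -(N * M.transpose * N.transpose) := by rw [hM, ← mul_assoc, mul_neg, neg_mul, neg_neg]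
    _ = -N.transpose := by rw [hNM, one_mul]
  exact congrFun₂ hN a b

variable {k : Type*} [Field k] [CharZero k] {e E : Fin 2 → Fin 2 → k}

theorem skew_cyclic_sum_eq_zero (he : ∀ a b, e a b = -e b a) (v : Fin 2 → k) (a b c : Fin 2) :
    e b c * v a + e c a * v b + e a b * v c = 0 := by
  have hdiag (a : Fin 2) : e a a = 0 := self_eq_neg.1 (he a a)
  obtain rfl | rfl | rfl : b = c ∨ a = c ∨ a = b := by omega
  · rw [hdiag, he a b]; ring
  · rw [hdiag, he a b]; ring
  · rw [hdiag, he a c]; ring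

theorem skew_apply_zero_one_ne_zero (he : ∀ a b, e a b = -e b a)
    (hE : ∀ a c, ∑ b, E a b * e c b = if a = c then 1 else 0) : e 0 1 ≠ 0 := by
  intro h
  have hdiag : e 0 0 = 0 := self_eq_neg.1 (he 0 0)
  simpa [Fin.sum_univ_two, hdiag, h] using hE 0 0

theorem skew_eq_mul_half_sum (he : ∀ a b, e a b = -e b a)
    (hE : ∀ a c, ∑ b, E a b * e c b = if a = c then 1 else 0) {T : Fin 2 → Fin 2 → k}
    (hT : ∀ a b, T a b = -T b a) (a b : Fin 2) :
    T a b = e a b * (1 / 2 * ∑ c, ∑ d, E c d * T c d) := by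
  have hne := skew_apply_zero_one_ne_zero he hE
  obtain ⟨t, ht⟩ : ∃ t, ∀ c d, T c d = e c d * t := by
    have hediag (a : Fin 2) : e a a = 0 := self_eq_neg.1 (he a a)
    have hTdiag (a : Fin 2) : T a a = 0 := self_eq_neg.1 (hT a a)
    refine ⟨T 0 1 / e 0 1, fun c d => ?_⟩
    rw [mul_div_assoc', eq_div_iff hne]
    revert c d
    simp only [Fin.forall_fin_two, hediag, hTdiag, he 1 0, hT 1 0]
    refine ⟨⟨?_, ?_⟩, ?_, ?_⟩ <;> ring
  have hcoeff : 1 / 2 * ∑ c, ∑ d, E c d * T c d = t := by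
    simp only [ht, ← mul_assoc, ← Finset.sum_mul, sum_mul_eq_card hE, Fintype.card_fin]
    norm_num
  rw [hcoeff, ht]

end AreaForm

section Curvature

variable {Γ : Fin 2 → Fin 2 → Fin 2 → (Fin 2 → ℝ) → ℝ} {K : Fin 2 → (Fin 2 → ℝ) → ℝ}
  {x : Fin 2 → ℝ}

theorem riem_skew (a b c d : Fin 2) : riem Γ a b c d x = -riem Γ b a c d x := by
  simp only [riem]
  ring

theorem riem_eq_schouten (a b c d : Fin 2) :
    riem Γ a b c d x = (if a = c then schouten Γ b d x else 0)
      - (if b = c then schouten Γ a d x else 0)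
      + (schouten Γ b a x - schouten Γ a b x) * (if c = d then 1 else 0) := by
  have hdiag (a c d : Fin 2) : riem Γ a a c d x = 0 := self_eq_neg.1 (riem_skew a a c d)
  have hskew (c d : Fin 2) : riem Γ 1 0 c d x = -riem Γ 0 1 c d x := riem_skew 1 0 c d
  fin_cases a <;> fin_cases b <;> fin_cases c <;> fin_cases d <;>
    simp [schouten, ricci, hdiag, hskew] <;> ring

theorem half_sum_mul_riem {εUp : Fin 2 → Fin 2 → (Fin 2 → ℝ) → ℝ}
    (hεUp : ∀ a b, εUp a b x = -εUp b a x) (c d : Fin 2) :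
    1 / 2 * ∑ a, ∑ b, εUp a b x * riem Γ a b c d x
      = schoutenUp Γ εUp c d x + 1 / 2 * betaInv Γ εUp x * (if c = d then 1 else 0) := by
  have hfst : ∑ a, ∑ b, εUp a b x * (if a = c then schouten Γ b d x else 0)
      = schoutenUp Γ εUp c d x := by
    simp [schoutenUp]
  have hsnd : ∑ a, ∑ b, εUp a b x * (if b = c then schouten Γ a d x else 0)
      = -schoutenUp Γ εUp c d x := by
    simp [schoutenUp, fun a => hεUp a c]
  have htrace : ∑ a, ∑ b, εUp a b x *
      ((schouten Γ b a x - schouten Γ a b x) * (if c = d then 1 else 0))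
      = betaInv Γ εUp x * (if c = d then 1 else 0) := by
    simp only [betaInv, Finset.sum_mul, mul_left_comm (εUp _ _ x), mul_assoc]
  simp only [riem_eq_schouten, mul_add, mul_sub, Finset.sum_add_distrib, Finset.sum_sub_distrib,
    hfst, hsnd, htrace]
  ring

theorem pdv_covForm (hΓ : ∀ a b c, DifferentiableAt ℝ (Γ a b c) x)
    (hK : ∀ a, ContDiffAt ℝ 2 (K a) x) (a b c : Fin 2) :
    pdv a (covForm Γ K b c) x = pdv a (pdv b (K c)) x
      - ∑ d, (pdv a (Γ d b c) x * K d x + Γ d b c x * pdv a (K d) x) := by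
  have hKd (d : Fin 2) : DifferentiableAt ℝ (K d) x := (hK d).differentiableAt (by norm_num)
  have hΓK (d : Fin 2) : DifferentiableAt ℝ (fun y => Γ d b c y * K d y) x :=
    (hΓ d b c).mul (hKd d)
  have hcov : covForm Γ K b c = fun y => pdv b (K c) y - ∑ d, Γ d b c y * K d y := rfl
  rw [hcov, pdv_sub (differentiableAt_pdv (hK c) b) (.fun_sum fun d _ => hΓK d), pdv_sum hΓK]
  simp only [pdv_mul (hΓ _ b c) (hKd _)]

/-- The Ricci identity `[∇_a, ∇_b] K_c = -R_{ab}{}^d{}_c K_d`; `covTwo`, which is written for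
2-forms, makes sense for the covariant 2-tensor `∇_b K_c` as well. -/
theorem covTwo_covForm_sub_swap (hsymm : ∀ a b c, Γ a b c x = Γ a c b x)
    (hΓ : ∀ a b c, DifferentiableAt ℝ (Γ a b c) x) (hK : ∀ a, ContDiffAt ℝ 2 (K a) x)
    (a b c : Fin 2) :
    covTwo Γ (covForm Γ K) a b c x - covTwo Γ (covForm Γ K) b a c x
      = -∑ d, riem Γ a b d c x * K d x := by
  simp only [covTwo, pdv_covForm hΓ hK, pdv_comm (hK c) b a, hsymm _ b a, riem, covForm,
    Fin.sum_univ_two]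
  ring

end Curvature

section CovTwo

variable {Γ : Fin 2 → Fin 2 → Fin 2 → (Fin 2 → ℝ) → ℝ}
  {ε T : Fin 2 → Fin 2 → (Fin 2 → ℝ) → ℝ} {x : Fin 2 → ℝ}

theorem covTwo_congr (h : ∀ a b, T a b =ᶠ[𝓝 x] ε a b) (a b c : Fin 2) :
    covTwo Γ T a b c x = covTwo Γ ε a b c x := by
  simp only [covTwo, pdv_congr (h b c), (h _ _).eq_of_nhds]

theorem covTwo_skew (h : ∀ᶠ y in 𝓝 x, ∀ a b, ε a b y = -ε b a y) (a b c : Fin 2) :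
    covTwo Γ ε a b c x = -covTwo Γ ε a c b x := by
  have hpdv : pdv a (ε b c) x = -pdv a (ε c b) x := by
    rw [← pdv_neg]
    exact pdv_congr (h.mono fun y hy => hy b c) a
  simp only [covTwo, hpdv, Fin.sum_univ_two]
  have hx := h.self_of_nhds
  linear_combination -Γ 0 a b x * hx 0 c - Γ 1 a b x * hx 1 c
    - Γ 0 a c x * hx b 0 - Γ 1 a c x * hx b 1

theorem covTwo_mul {μ : (Fin 2 → ℝ) → ℝ} (hε : ∀ a b, DifferentiableAt ℝ (ε a b) x)
    (hμ : DifferentiableAt ℝ μ x) (a b c : Fin 2) :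
    covTwo Γ (fun b c y => ε b c y * μ y) a b c x
      = ε b c x * pdv a μ x + μ x * covTwo Γ ε a b c x := by
  simp only [covTwo, pdv_mul (hε b c) hμ, Fin.sum_univ_two]
  ring

end CovTwo

section Prolongation

/-- `K` solves the Killing equation `∇_{(a}K_{b)} = 0` on `U` (up to the factor `1/2`). -/
def IsKillingOn (Γ : Fin 2 → Fin 2 → Fin 2 → (Fin 2 → ℝ) → ℝ) (K : Fin 2 → (Fin 2 → ℝ) → ℝ)
    (U : Set (Fin 2 → ℝ)) : Prop :=
  ∀ a b, ∀ x ∈ U, covForm Γ K a b x + covForm Γ K b a x = 0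

/-- `(K, μ)` is a parallel section over `U` of the prolongation connection `D`. The derivatives of
`μ` are `pdv`, so the differentiability of `μ` is not part of the definition. -/
def IsProlongationParallelOn (Γ : Fin 2 → Fin 2 → Fin 2 → (Fin 2 → ℝ) → ℝ)
    (ε εUp : Fin 2 → Fin 2 → (Fin 2 → ℝ) → ℝ) (K : Fin 2 → (Fin 2 → ℝ) → ℝ)
    (μ : (Fin 2 → ℝ) → ℝ) (U : Set (Fin 2 → ℝ)) : Prop :=
  (∀ a b, ∀ x ∈ U, covForm Γ K a b x - ε a b x * μ x = 0) ∧
  (∀ a, ∀ x ∈ U,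
    pdv a μ x
      - (∑ b, (schoutenUp Γ εUp b a x
          + (1 / 2) * betaInv Γ εUp x * (if b = a then (1 : ℝ) else 0)) * K b x)
      + μ x * thetaForm Γ ε εUp a x = 0)

/-- The function `½ ε^{ab} ∇_a K_b`, i.e. the curl of `K` measured against the area form. -/
noncomputable def formCurl (Γ : Fin 2 → Fin 2 → Fin 2 → (Fin 2 → ℝ) → ℝ)
    (εUp : Fin 2 → Fin 2 → (Fin 2 → ℝ) → ℝ) (K : Fin 2 → (Fin 2 → ℝ) → ℝ)
    (x : Fin 2 → ℝ) : ℝ :=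
  (1 / 2) * ∑ a, ∑ b, εUp a b x * covForm Γ K a b x

variable {Γ : Fin 2 → Fin 2 → Fin 2 → (Fin 2 → ℝ) → ℝ}
  {ε εUp : Fin 2 → Fin 2 → (Fin 2 → ℝ) → ℝ} {K : Fin 2 → (Fin 2 → ℝ) → ℝ}
  {μ : (Fin 2 → ℝ) → ℝ} {x : Fin 2 → ℝ} {U : Set (Fin 2 → ℝ)}

theorem covTwo_eq_mul_thetaForm (hskew : ∀ᶠ y in 𝓝 x, ∀ a b, ε a b y = -ε b a y)
    (hεUp : ∀ a c, ∑ b, εUp a b x * ε c b x = if a = c then 1 else 0) (a b c : Fin 2) :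
    covTwo Γ ε a b c x = ε b c x * thetaForm Γ ε εUp a x :=
  skew_eq_mul_half_sum (T := fun b c => covTwo Γ ε a b c x) hskew.self_of_nhds hεUp
    (covTwo_skew hskew a) b c

theorem mul_pdv_add_thetaForm_eq_sum_riem (hsymm : ∀ a b c, Γ a b c x = Γ a c b x)
    (hΓ : ∀ a b c, DifferentiableAt ℝ (Γ a b c) x)
    (hskew : ∀ᶠ y in 𝓝 x, ∀ a b, ε a b y = -ε b a y)
    (hε : ∀ a b, DifferentiableAt ℝ (ε a b) x)
    (hεUp : ∀ a c, ∑ b, εUp a b x * ε c b x = if a = c then 1 else 0)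
    (hK : ∀ a, ContDiffAt ℝ 2 (K a) x) (hμ : DifferentiableAt ℝ μ x)
    (hKμ : ∀ a b, covForm Γ K a b =ᶠ[𝓝 x] fun y => ε a b y * μ y) (a b c : Fin 2) :
    ε a b x * (pdv c μ x + μ x * thetaForm Γ ε εUp c x) = ∑ d, riem Γ a b d c x * K d x := by
  have hcov (a b c : Fin 2) : covTwo Γ (covForm Γ K) a b c x
      = ε b c x * (pdv a μ x + μ x * thetaForm Γ ε εUp a x) := by
    rw [covTwo_congr hKμ, covTwo_mul hε hμ, covTwo_eq_mul_thetaForm hskew hεUp]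
    ring
  have hricci := covTwo_covForm_sub_swap hsymm hΓ hK a b c
  rw [hcov, hcov, hskew.self_of_nhds a c] at hricci
  linear_combination skew_cyclic_sum_eq_zero hskew.self_of_nhds
    (fun a => pdv a μ x + μ x * thetaForm Γ ε εUp a x) a b c - hricci

theorem pdv_add_thetaForm_eq_sum_schoutenUp (hsymm : ∀ a b c, Γ a b c x = Γ a c b x)
    (hΓ : ∀ a b c, DifferentiableAt ℝ (Γ a b c) x)
    (hskew : ∀ᶠ y in 𝓝 x, ∀ a b, ε a b y = -ε b a y)
    (hε : ∀ a b, DifferentiableAt ℝ (ε a b) x)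
    (hεUp : ∀ a c, ∑ b, εUp a b x * ε c b x = if a = c then 1 else 0)
    (hK : ∀ a, ContDiffAt ℝ 2 (K a) x) (hμ : DifferentiableAt ℝ μ x)
    (hKμ : ∀ a b, covForm Γ K a b =ᶠ[𝓝 x] fun y => ε a b y * μ y) (c : Fin 2) :
    pdv c μ x + μ x * thetaForm Γ ε εUp c x
      = ∑ d, (schoutenUp Γ εUp d c x
          + 1 / 2 * betaInv Γ εUp x * (if d = c then 1 else 0)) * K d x := by
  have hεUp_skew (a b : Fin 2) : εUp a b x = -εUp b a x :=
    skew_of_mul_transpose_eq_one (e := fun a b => ε a b x) (E := fun a b => εUp a b x)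
      hskew.self_of_nhds hεUp a b
  have hcard : ∑ a, ∑ b, εUp a b x * ε a b x = 2 := by
    simpa using sum_mul_eq_card (e := fun a b => ε a b x) hεUp
  set ν := pdv c μ x + μ x * thetaForm Γ ε εUp c x with hν
  calc ν = 1 / 2 * ∑ a, ∑ b, εUp a b x * (ε a b x * ν) := by
        simp only [← mul_assoc, ← Finset.sum_mul, hcard]
        ring
    _ = 1 / 2 * ∑ a, ∑ b, εUp a b x * ∑ d, riem Γ a b d c x * K d x := by
        simp only [hν, mul_pdv_add_thetaForm_eq_sum_riem hsymm hΓ hskew hε hεUp hK hμ hKμ]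
    _ = ∑ d, (1 / 2 * ∑ a, ∑ b, εUp a b x * riem Γ a b d c x) * K d x := by
        simp only [Fin.sum_univ_two]
        ring
    _ = _ := by simp only [half_sum_mul_riem hεUp_skew]

theorem IsProlongationParallelOn.isKillingOn
    (h : IsProlongationParallelOn Γ ε εUp K μ U) (hskew : ∀ a b, ∀ x ∈ U, ε a b x = -ε b a x) :
    IsKillingOn Γ K U := fun a b x hx => by
  linear_combination h.1 a b x hx + h.1 b a x hx + μ x * hskew a b x hx

theorem IsProlongationParallelOn.eq_formCurl (h : IsProlongationParallelOn Γ ε εUp K μ U)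
    (hεUp : ∀ a c, ∀ x ∈ U, ∑ b, εUp a b x * ε c b x = if a = c then 1 else 0)
    (hx : x ∈ U) : μ x = formCurl Γ εUp K x := by
  have hcard : ∑ a, ∑ b, εUp a b x * ε a b x = 2 := by
    simpa using sum_mul_eq_card (e := fun a b => ε a b x) fun a c => hεUp a c x hx
  simp only [formCurl, fun a b => sub_eq_zero.1 (h.1 a b x hx), ← mul_assoc, ← Finset.sum_mul]
  rw [mul_assoc (1 / 2), hcard]
  ring

theorem IsKillingOn.covForm_eq_mul_formCurl (h : IsKillingOn Γ K U)
    (hskew : ∀ a b, ∀ x ∈ U, ε a b x = -ε b a x)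
    (hεUp : ∀ a c, ∀ x ∈ U, ∑ b, εUp a b x * ε c b x = if a = c then 1 else 0)
    (hx : x ∈ U) (a b : Fin 2) : covForm Γ K a b x = ε a b x * formCurl Γ εUp K x :=
  skew_eq_mul_half_sum (e := fun a b => ε a b x) (E := fun a b => εUp a b x)
    (T := fun a b => covForm Γ K a b x) (fun a b => hskew a b x hx) (fun a c => hεUp a c x hx)
    (fun a b => eq_neg_of_add_eq_zero_left (h a b x hx)) a b

theorem IsKillingOn.contDiffOn_two (h : IsKillingOn Γ K U) (hU : IsOpen U)
    (hΓ : ∀ a b c, ContDiffOn ℝ 1 (Γ a b c) U) (hK : ∀ a, ContDiffOn ℝ 1 (K a) U) (c : Fin 2) :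
    ContDiffOn ℝ 2 (K c) U := by
  refine contDiffOn_two_of_pdv_add_pdv
    (S := fun a b y => ∑ c, (Γ c a b y * K c y + Γ c b a y * K c y)) hU
    (fun a => (hK a).differentiableOn (by norm_num))
    (fun a b => .sum fun c _ => ((hΓ c a b).mul (hK c)).add ((hΓ c b a).mul (hK c)))
    (fun a b y hy => ?_) c
  have hkilling := h a b y hy
  simp only [covForm] at hkilling
  rw [Finset.sum_add_distrib]
  linear_combination hkilling

theorem IsKillingOn.differentiableAt_formCurl (h : IsKillingOn Γ K U) (hU : IsOpen U)
    (hΓ : ∀ a b c, ContDiffOn ℝ 1 (Γ a b c) U) (hskew : ∀ a b, ∀ x ∈ U, ε a b x = -ε b a x)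
    (hε : ∀ a b, DifferentiableOn ℝ (ε a b) U)
    (hεUp : ∀ a c, ∀ x ∈ U, ∑ b, εUp a b x * ε c b x = if a = c then 1 else 0)
    (hK : ∀ a, ContDiffOn ℝ 1 (K a) U) (hx : x ∈ U) :
    DifferentiableAt ℝ (formCurl Γ εUp K) x := by
  have hUx : U ∈ 𝓝 x := hU.mem_nhds hx
  have hne {y} (hy : y ∈ U) : ε 0 1 y ≠ 0 :=
    skew_apply_zero_one_ne_zero (e := fun a b => ε a b y) (fun a b => hskew a b y hy)
      fun a c => hεUp a c y hy
  have hcurl : formCurl Γ εUp K =ᶠ[𝓝 x] fun y => covForm Γ K 0 1 y * (ε 0 1 y)⁻¹ :=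
    eventually_of_mem hUx fun y hy =>
      (eq_mul_inv_iff_mul_eq₀ (hne hy)).2 (by
        rw [h.covForm_eq_mul_formCurl hskew hεUp hy, mul_comm])
  have hcov : DifferentiableAt ℝ (covForm Γ K 0 1) x :=
    (differentiableAt_pdv ((h.contDiffOn_two hU hΓ hK 1).contDiffAt hUx) 0).sub
      (.fun_sum fun c _ => (((hΓ c 0 1).mul (hK c)).contDiffAt hUx).differentiableAt (by norm_num))
  exact (hcov.mul (((hε 0 1).differentiableAt hUx).inv (hne hx))).congr_of_eventuallyEq hcurl

theorem IsKillingOn.isProlongationParallelOn_formCurl (h : IsKillingOn Γ K U) (hU : IsOpen U)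
    (hΓsym : ∀ a b c, ∀ x ∈ U, Γ a b c x = Γ a c b x)
    (hΓ : ∀ a b c, ContDiffOn ℝ 1 (Γ a b c) U) (hskew : ∀ a b, ∀ x ∈ U, ε a b x = -ε b a x)
    (hε : ∀ a b, DifferentiableOn ℝ (ε a b) U)
    (hεUp : ∀ a c, ∀ x ∈ U, ∑ b, εUp a b x * ε c b x = if a = c then 1 else 0)
    (hK : ∀ a, ContDiffOn ℝ 1 (K a) U) :
    IsProlongationParallelOn Γ ε εUp K (formCurl Γ εUp K) U := by
  have hcov {y} (hy : y ∈ U) := h.covForm_eq_mul_formCurl hskew hεUp hy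
  refine ⟨fun a b x hx => sub_eq_zero.2 (hcov hx a b), fun a x hx => ?_⟩
  have hUx : U ∈ 𝓝 x := hU.mem_nhds hx
  have hparallel := pdv_add_thetaForm_eq_sum_schoutenUp (fun a b c => hΓsym a b c x hx)
    (fun a b c => ((hΓ a b c).contDiffAt hUx).differentiableAt (by norm_num))
    (eventually_of_mem hUx fun y hy a b => hskew a b y hy)
    (fun a b => (hε a b).differentiableAt hUx) (fun a c => hεUp a c x hx)
    (fun a => (h.contDiffOn_two hU hΓ hK a).contDiffAt hUx)
    (h.differentiableAt_formCurl hU hΓ hskew hε hεUp hK hx)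
    (fun a b => eventually_of_mem hUx fun y hy => hcov hy a b) a
  rw [← hparallel]
  ring

end Prolongation

theorem killing_iff_parallel_section_of_prolongation_general
    {U : Set (Fin 2 → ℝ)} (hU : IsOpen U) {Γ : Fin 2 → Fin 2 → Fin 2 → (Fin 2 → ℝ) → ℝ}
    (hΓsym : ∀ a b c, ∀ x ∈ U, Γ a b c x = Γ a c b x)
    (hΓ : ∀ a b c, ContDiffOn ℝ 1 (Γ a b c) U)
    {ε εUp : Fin 2 → Fin 2 → (Fin 2 → ℝ) → ℝ} (hskew : ∀ a b, ∀ x ∈ U, ε a b x = -ε b a x)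
    (hε : ∀ a b, DifferentiableOn ℝ (ε a b) U)
    (hεUp : ∀ a c, ∀ x ∈ U, ∑ b, εUp a b x * ε c b x = if a = c then 1 else 0)
    {K : Fin 2 → (Fin 2 → ℝ) → ℝ} (hK : ∀ a, ContDiffOn ℝ 1 (K a) U) :
    (IsKillingOn Γ K U ↔ ∃ μ, IsProlongationParallelOn Γ ε εUp K μ U) ∧
      ∀ μ, IsProlongationParallelOn Γ ε εUp K μ U → ∀ x ∈ U, μ x = formCurl Γ εUp K x :=
  ⟨⟨fun h => ⟨_, h.isProlongationParallelOn_formCurl hU hΓsym hΓ hskew hε hεUp hK⟩,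
    fun ⟨_, h⟩ => h.isKillingOn hskew⟩, fun _ h _ hx => h.eq_formCurl hεUp hx⟩

/-- Solutions of the Killing equation `∇_{(a}K_{b)} = 0` correspond exactly to parallel
sections `(K, μ)` of the prolongation connection `D`, with `μ = ½ ε^{ab} ∇_a K_b`. -/
theorem killing_iff_parallel_section_of_prolongation
    (U : Set (Fin 2 → ℝ)) (hU : IsOpen U)
    (Γ : Fin 2 → Fin 2 → Fin 2 → (Fin 2 → ℝ) → ℝ)
    (hΓsym : ∀ a b c x, Γ a b c x = Γ a c b x)
    (hΓ : ∀ a b c, ContDiffOn ℝ 4 (Γ a b c) U)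
    (ε εUp : Fin 2 → Fin 2 → (Fin 2 → ℝ) → ℝ)
    (hskew : ∀ a b x, ε a b x = -ε b a x)
    (hεsmooth : ∀ a b, ContDiffOn ℝ (⊤ : ℕ∞) (ε a b) U)
    (hε0 : ∀ x ∈ U, ε 0 1 x ≠ 0)
    (hεUp : ∀ a c : Fin 2, ∀ x ∈ U,
      ∑ b, εUp a b x * ε c b x = if a = c then (1 : ℝ) else 0)
    (K : Fin 2 → (Fin 2 → ℝ) → ℝ)
    (hK : ∀ a, ContDiffOn ℝ 1 (K a) U) :
    ((∀ a b : Fin 2, ∀ x ∈ U, covForm Γ K a b x + covForm Γ K b a x = 0)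
      ↔ ∃ μ : (Fin 2 → ℝ) → ℝ,
          (∀ a b : Fin 2, ∀ x ∈ U, covForm Γ K a b x - ε a b x * μ x = 0) ∧
          (∀ a : Fin 2, ∀ x ∈ U,
            pdv a μ x
              - (∑ b, (schoutenUp Γ εUp b a x
                  + (1 / 2) * betaInv Γ εUp x * (if b = a then (1 : ℝ) else 0)) * K b x)
              + μ x * thetaForm Γ ε εUp a x = 0))
    ∧ (∀ μ : (Fin 2 → ℝ) → ℝ,
        ((∀ a b : Fin 2, ∀ x ∈ U, covForm Γ K a b x - ε a b x * μ x = 0) ∧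
         (∀ a : Fin 2, ∀ x ∈ U,
            pdv a μ x
              - (∑ b, (schoutenUp Γ εUp b a x
                  + (1 / 2) * betaInv Γ εUp x * (if b = a then (1 : ℝ) else 0)) * K b x)
              + μ x * thetaForm Γ ε εUp a x = 0)) →
        ∀ x ∈ U, μ x = (1 / 2) * ∑ a, ∑ b, εUp a b x * covForm Γ K a b x) :=
  killing_iff_parallel_section_of_prolongation_general hU (fun a b c x _ => hΓsym a b c x)
    (fun a b c => (hΓ a b c).of_le (by norm_num)) (fun a b x _ => hskew a b x)
    (fun a b => (hεsmooth a b).differentiableOn (by simp)) hεUp hK
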